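/- arXiv:1308.0429 — 2 statements merged into one kernel-verified Lean document; each statement's English description precedes it below -/
import Mathlib

section
/- Let A be a separable C*-algebra such that every element of A is a norm limit of invertible elements of the unitization Ã. Let G be a finite group and let α and β be actions of G on A. Assume: (1) for every g ∈ G, the automorphisms α_g and β_g are approximately unitarily equivalent, i.e. for every finite set F₁ ⊆ A and δ > 0 there is a unitary u in the multiplier algebra M(A) with ‖u·β_g(y)·u* − α_g(y)‖ < δ for all y ∈ F₁; and (2) α admits Rohlin sequences: for each g ∈ G there is a sequence (f_{g,n})_{n∈ℕ} of positive contractions in A such that for all a ∈ A and all g, h ∈ G one has lim_n ‖f_{g,n}·a − a·f_{g,n}‖ = 0, lim_n ‖f_{g,n}·f_{h,n}·a‖ = 0 whenever g ≠ h, lim_n ‖(f_{g,n}² − f_{g,n})·a‖ = 0, lim_n ‖(Σ_{k∈G} f_{k,n})·a − a‖ = 0, and lim_n ‖(α_g(f_{h,n}) − f_{gh,n})·a‖ = 0. Then for every finite set F ⊆ A and every ε > 0 there exists a unitary element v of Ã such that for every x ∈ F: ‖β_g(x) − v*·α_g(v·x·v*)·v‖ < ε for all g ∈ G, and ‖v·x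 − x·v‖ < ε + sup_{g∈G} ‖β_g(x) − α_g(x)‖. (Lemma 3.4 of the paper, with the Rohlin property of α expressed by representative sequences of the Rohlin projections in the central sequence algebra F(A), and with the consequence of 'almost stable rank one' that is used in the proof, namely A ⊆ closure(GL(Ã)), taken as hypothesis.) -/
open scoped MultiplierAlgebra
open Filter Topology

section Polar

variable {B : Type*} [CStarAlgebra B]

theorem norm_sub_one_mul_le [PartialOrder B] [StarOrderedRing B] {r : B} (hr : 0 ≤ r) (y : B) :
    ‖(r - 1) * y‖ ≤ ‖(r * r - 1) * y‖ := by
  have h1 : (1 : B) ≤ r + 1 := le_add_of_nonneg_left hr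
  obtain ⟨u, hu⟩ := CStarAlgebra.isUnit_of_le 1 h1
  have hu1 : (1 : B) ≤ u := hu ▸ h1
  have hinv : ‖(↑u⁻¹ : B)‖ ≤ 1 :=
    (CStarAlgebra.norm_le_one_iff_of_nonneg _
      (CFC.inv_nonneg_of_nonneg u (zero_le_one.trans hu1))).2 (CStarAlgebra.inv_le_one hu1)
  have key : (r - 1) * y = ↑u⁻¹ * ((r * r - 1) * y) := by
    rw [Units.eq_inv_mul_iff_mul_eq, hu]
    noncomm_ring
  rw [key]
  exact (norm_mul_le _ _).trans (mul_le_of_le_one_left (norm_nonneg _) hinv)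

theorem IsUnit.exists_unitary_norm_sub_mul_le {z : B} (hz : IsUnit z) :
    ∃ v ∈ unitary B, ∀ y : B, ‖(v - z) * y‖ ≤ ‖(star z * z - 1) * y‖ := by
  let _ := CStarAlgebra.spectralOrder B
  let _ := CStarAlgebra.spectralOrderedRing B
  have hsq : CFC.abs z * CFC.abs z = star z * z := CFC.abs_mul_abs z
  have hr0 : 0 ≤ CFC.abs z := CFC.abs_nonneg z
  have hunit : IsUnit (CFC.abs z) := by
    have : IsUnit (CFC.abs z * CFC.abs z) := hsq ▸ hz.star.mul hz
    exact ((Commute.refl _).isUnit_mul_iff.1 this).1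
  obtain ⟨r, hr⟩ := hunit
  have hrsa : star (r : B) = r := by rw [hr]; exact hr0.isSelfAdjoint
  have hrsa' : star (↑r⁻¹ : B) = ↑r⁻¹ := by
    rw [← Units.coe_star_inv, show star r = r from Units.ext hrsa]
  have hv1 : star (z * ↑r⁻¹) * (z * ↑r⁻¹) = 1 := by
    rw [star_mul, hrsa', mul_assoc, ← mul_assoc (star z), ← hsq, ← hr]
    simp [mul_assoc]
  have hv2 : (z * ↑r⁻¹) * star (z * ↑r⁻¹) = 1 :=
    (hz.mul r⁻¹.isUnit).mul_right_cancel (by rw [mul_assoc, hv1, mul_one, one_mul])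
  have hv : z * ↑r⁻¹ ∈ unitary B := Unitary.mem_iff.2 ⟨hv1, hv2⟩
  refine ⟨_, hv, fun y => ?_⟩
  have : (z * ↑r⁻¹ - z) * y = -((z * ↑r⁻¹) * ((CFC.abs z - 1) * y)) := by
    rw [← hr]; simp [sub_mul, mul_sub, mul_assoc]
  rw [this, norm_neg, CStarRing.norm_mem_unitary_mul _ hv, ← hsq]
  exact norm_sub_one_mul_le hr0 y

theorem exists_unitary_near_of_mem_closure_isUnit {w : B}
    (hw : w ∈ closure {x : B | IsUnit x}) (E : Finset B) {δ : ℝ}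
    (hE : ∀ y ∈ E, ‖(star w * w - 1) * y‖ < δ) :
    ∃ v ∈ unitary B, ∀ y ∈ E, ‖(v - w) * y‖ < δ := by
  have hnear : ∀ᶠ z in 𝓝 w, ∀ y ∈ E, ‖(star z * z - 1) * y‖ + ‖(z - w) * y‖ < δ := by
    rw [Filter.eventually_all_finset]
    intro y hy
    have hc : ContinuousAt (fun z => ‖(star z * z - 1) * y‖ + ‖(z - w) * y‖) w := by
      fun_prop
    exact hc.eventually_lt_const (by simpa using hE y hy)
  obtain ⟨z, hz, hzu⟩ := ((mem_closure_iff_frequently.1 hw).and_eventually hnear).exists.imp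
    fun _ h => h.symm
  obtain ⟨v, hv, hvz⟩ := IsUnit.exists_unitary_norm_sub_mul_le hzu
  refine ⟨v, hv, fun y hy => lt_of_le_of_lt ?_ (hz y hy)⟩
  calc ‖(v - w) * y‖ = ‖(v - z) * y + (z - w) * y‖ := by noncomm_ring
    _ ≤ _ := (norm_add_le _ _).trans (by gcongr; exact hvz y)

end Polar

namespace DoubleCentralizer

variable {A : Type*} [NonUnitalCStarAlgebra A]

theorem fst_mul (u : 𝓜(ℂ, A)) (a b : A) : u.fst (a * b) = u.fst a * b := by
  have h (c : A) : c * (u.fst (a * b) - u.fst a * b) = 0 := by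
    rw [mul_sub, ← u.central, ← mul_assoc, ← mul_assoc, u.central, sub_self]
  exact sub_eq_zero.1 ((CStarRing.star_mul_self_eq_zero_iff _).1 (h _))

theorem star_fst_fst_of_mem_unitary {u : 𝓜(ℂ, A)} (hu : u ∈ unitary 𝓜(ℂ, A)) (a : A) :
    (star u).fst (u.fst a) = a := by
  have h := congrArg (fun m : 𝓜(ℂ, A) => m.fst a) (Unitary.star_mul_self_of_mem hu)
  simpa only [mul_fst, one_fst, mul_apply_eq_comp, one_apply_eq_self] using h

theorem norm_snd_le_of_mem_unitary {u : 𝓜(ℂ, A)} (hu : u ∈ unitary 𝓜(ℂ, A)) (a : A) :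
    ‖u.snd a‖ ≤ ‖a‖ := by
  have hn : ‖u‖ ≤ 1 := by
    nontriviality 𝓜(ℂ, A)
    exact (CStarRing.norm_of_mem_unitary hu).le
  calc ‖u.snd a‖ ≤ ‖u.snd‖ * ‖a‖ := u.snd.le_opNorm a
    _ ≤ ‖a‖ := mul_le_of_le_one_left (norm_nonneg a) (by rwa [norm_snd])

end DoubleCentralizer

/-- Two sequences are asymptotically equal if their difference tends to zero. -/
def AsympEq {E : Type*} [NormedAddCommGroup E] (x y : ℕ → E) : Prop :=
  Tendsto (fun n => x n - y n) atTop (𝓝 0)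

namespace AsympEq

variable {E E' : Type*} [NormedAddCommGroup E] [NormedAddCommGroup E'] {x y z : ℕ → E}

theorem symm (h : AsympEq x y) : AsympEq y x := by simpa [AsympEq] using h.neg

theorem trans (h : AsympEq x y) (h' : AsympEq y z) : AsympEq x z := by
  simpa [AsympEq] using Tendsto.add h h'

theorem sum {ι : Type*} {s : Finset ι} {x y : ι → ℕ → E} (h : ∀ i ∈ s, AsympEq (x i) (y i)) :
    AsympEq (fun n => ∑ i ∈ s, x i n) (fun n => ∑ i ∈ s, y i n) := by
  simpa [AsympEq] using tendsto_finsetSum s h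

theorem map (h : AsympEq x y) {F : Type*} [FunLike F E E'] [AddMonoidHomClass F E E'] (φ : F)
    (hφ : Continuous φ) : AsympEq (fun n => φ (x n)) (fun n => φ (y n)) := by
  simpa [AsympEq, Function.comp_def] using (hφ.tendsto 0).comp h

theorem eventually_norm_sub_lt (h : AsympEq x y) {δ : ℝ} (hδ : 0 < δ) :
    ∀ᶠ n in atTop, ‖x n - y n‖ < δ :=
  h.norm.eventually_lt_const (by simpa using hδ)

theorem of_norm {x y : ℕ → E} (h : Tendsto (fun n => ‖x n - y n‖) atTop (𝓝 0)) : AsympEq x y :=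
  tendsto_zero_iff_norm_tendsto_zero.2 h

variable {A : Type*} [NonUnitalCStarAlgebra A] {a b c : ℕ → A}

theorem bdd_mul (h : AsympEq a b) (hc : ∃ K, ∀ n, ‖c n‖ ≤ K) :
    AsympEq (fun n => c n * a n) (fun n => c n * b n) := by
  obtain ⟨K, hK⟩ := hc
  refine squeeze_zero_norm (a := fun n => K * ‖a n - b n‖) (fun n => ?_) ?_
  · rw [← mul_sub]
    exact (norm_mul_le _ _).trans (by gcongr; exact hK n)
  · simpa using (Tendsto.norm h).const_mul K

theorem const_mul (h : AsympEq a b) (d : A) : AsympEq (fun n => d * a n) (fun n => d * b n) :=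
  h.bdd_mul ⟨‖d‖, fun _ => le_rfl⟩

theorem mul_const (h : AsympEq a b) (d : A) : AsympEq (fun n => a n * d) (fun n => b n * d) := by
  simpa [AsympEq, sub_mul] using Tendsto.mul_const d h

end AsympEq

/-- A family of sequences of self-adjoint contractions representing mutually orthogonal
projections of sum one in the central sequence algebra `F(A)`. -/
structure IsCentralPartition {A : Type*} [NonUnitalCStarAlgebra A] {ι : Type*} [Fintype ι]
    (f : ι → ℕ → A) : Prop where
  star_eq : ∀ i n, star (f i n) = f i n
  norm_le : ∀ i n, ‖f i n‖ ≤ 1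
  central : ∀ a i, AsympEq (fun n => f i n * a) (fun n => a * f i n)
  orth : ∀ a i j, i ≠ j → AsympEq (fun n => f i n * (f j n * a)) 0
  idem : ∀ a i, AsympEq (fun n => f i n * (f i n * a)) (fun n => f i n * a)
  sum_mul : ∀ a, AsympEq (fun n => ∑ i, f i n * a) (fun _ => a)

namespace IsCentralPartition

variable {A : Type*} [NonUnitalCStarAlgebra A] {ι : Type*} [Fintype ι] {f : ι → ℕ → A}

theorem mul_mul_of_ne (hf : IsCentralPartition f) (c : A) {i j : ι} (hij : i ≠ j) :
    AsympEq (fun n => f i n * (c * f j n)) 0 :=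
  ((hf.central c j).symm.bdd_mul ⟨1, hf.norm_le i⟩).trans (hf.orth c i j hij)

theorem mul_mul_self (hf : IsCentralPartition f) (c : A) (i : ι) :
    AsympEq (fun n => f i n * (c * f i n)) (fun n => f i n * c) :=
  ((hf.central c i).symm.bdd_mul ⟨1, hf.norm_le i⟩).trans (hf.idem c i)

theorem sum_sum {E : Type*} [NormedAddCommGroup E] {x : ι → ι → ℕ → E} {y : ι → ℕ → E}
    (hself : ∀ i, AsympEq (x i i) (y i)) (hne : ∀ i j, i ≠ j → AsympEq (x i j) 0) :
    AsympEq (fun n => ∑ i, ∑ j, x i j n) (fun n => ∑ i, y i n) := by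
  classical
  refine AsympEq.sum fun i _ => ?_
  have h := AsympEq.sum (s := Finset.univ) (x := x i) (y := fun j => if i = j then y i else 0)
    fun j _ => by
      split_ifs with hij
      · exact hij ▸ hself i
      · exact hne i j hij
  simpa [ite_apply] using h

/-- Conjugation by `∑ i, f i * u i` acts asymptotically as `∑ i, f i * Ad (u i)`. -/
theorem conj_sum_snd (hf : IsCentralPartition f) (u : ι → 𝓜(ℂ, A)) (x : A) :
    AsympEq (fun n => (∑ i, (u i).snd (f i n)) * x * star (∑ i, (u i).snd (f i n)))
      (fun n => ∑ i, f i n * (star (u i)).snd ((u i).fst x)) := by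
  have h := sum_sum (x := fun i j n => f i n * ((star (u j)).snd ((u i).fst x) * f j n))
    (fun i => hf.mul_mul_self _ i) fun i j => hf.mul_mul_of_ne _
  convert h using 2 with n
  rw [star_sum, Finset.sum_mul, Finset.sum_mul]
  refine Finset.sum_congr rfl fun i _ => ?_
  rw [Finset.mul_sum]
  refine Finset.sum_congr rfl fun j _ => ?_
  have hs : star ((u j).snd (f j n)) = (star (u j)).fst (f j n) := by
    rw [DoubleCentralizer.star_fst, hf.star_eq]
  rw [hs, (u i).central, mul_assoc, (star (u j)).central]

theorem star_sum_snd_mul (hf : IsCentralPartition f) {u : ι → 𝓜(ℂ, A)}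
    (hu : ∀ i, u i ∈ unitary 𝓜(ℂ, A)) (y : A) :
    AsympEq (fun n => star (∑ i, (u i).snd (f i n)) * ((∑ i, (u i).snd (f i n)) * y))
      (fun _ => y) := by
  have hself (i : ι) : AsympEq (fun n => (star (u i)).fst (f i n * (f i n * (u i).fst y)))
      (fun n => f i n * y) := by
    have h := ((hf.idem ((u i).fst y) i).trans (hf.central _ i)).map (star (u i)).fst
      (star (u i)).fst.continuous
    simp only [DoubleCentralizer.fst_mul _ ((u i).fst y),
      DoubleCentralizer.star_fst_fst_of_mem_unitary (hu i)] at h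
    exact h.trans (hf.central y i).symm
  have hne (i j : ι) (hij : i ≠ j) :
      AsympEq (fun n => (star (u i)).fst (f i n * (f j n * (u j).fst y))) 0 := by
    have h := (hf.orth ((u j).fst y) i j hij).map (star (u i)).fst (star (u i)).fst.continuous
    simp only [Pi.zero_apply, map_zero] at h
    exact h
  refine AsympEq.trans ?_ (hf.sum_mul y)
  convert sum_sum hself hne using 2 with n
  rw [star_sum, Finset.sum_mul, Finset.sum_mul]
  refine Finset.sum_congr rfl fun i _ => ?_
  rw [Finset.mul_sum]
  refine Finset.sum_congr rfl fun j _ => ?_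
  rw [(u j).central, DoubleCentralizer.fst_mul, DoubleCentralizer.star_fst, hf.star_eq]

theorem star_sum_mul_self (hf : IsCentralPartition f) (c : ι → A) :
    AsympEq (fun n => star (∑ i, f i n * c i) * ∑ i, f i n * c i)
      (fun n => ∑ i, f i n * (star (c i) * c i)) := by
  have hself (i : ι) : AsympEq (fun n => star (c i) * (f i n * (f i n * c i)))
      (fun n => f i n * (star (c i) * c i)) := by
    refine ((hf.idem (c i) i).const_mul (star (c i))).trans ?_
    simpa only [mul_assoc] using ((hf.central (star (c i)) i).symm.mul_const (c i))
  have hne (i j : ι) (hij : i ≠ j) :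
      AsympEq (fun n => star (c i) * (f i n * (f j n * c j))) 0 := by
    have h := (hf.orth (c j) i j hij).const_mul (star (c i))
    simp only [Pi.zero_apply, mul_zero] at h
    exact h
  convert sum_sum hself hne using 2 with n
  rw [star_sum, Finset.sum_mul]
  refine Finset.sum_congr rfl fun i _ => ?_
  rw [Finset.mul_sum]
  refine Finset.sum_congr rfl fun j _ => ?_
  rw [star_mul, hf.star_eq, mul_assoc]

theorem norm_sum_mul_le (hf : IsCentralPartition f) {c : ι → A} {M : ℝ} (hc : ∀ i, ‖c i‖ ≤ M)
    (n : ℕ) : ‖∑ i, f i n * c i‖ ≤ Fintype.card ι * M := by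
  refine (norm_sum_le_of_le (f := fun i => f i n * c i) (n := fun _ => M)
    Finset.univ fun i _ => ?_).trans_eq (by simp)
  exact (norm_mul_le _ _).trans ((mul_le_of_le_one_left (norm_nonneg _) (hf.norm_le i n)).trans
    (hc i))

theorem eventually_norm_sum_mul_lt_rpow (hf : IsCentralPartition f) (m : ℕ) :
    ∀ (c : ι → A) (M : ℝ), 0 ≤ M → (∀ i, ‖c i‖ ≤ M) → ∀ K : ℝ,
      (Fintype.card ι) ^ ((1 / 2 : ℝ) ^ m) * M < K → ∀ᶠ n in atTop, ‖∑ i, f i n * c i‖ < K := by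
  induction m with
  | zero =>
    intro c M _ hc K hK
    refine Eventually.of_forall fun n => (hf.norm_sum_mul_le hc n).trans_lt ?_
    simpa using hK
  | succ m ih =>
    intro c M hM hc K hK
    set N : ℝ := (Fintype.card ι : ℝ)
    have hN : 0 ≤ N := Nat.cast_nonneg _
    have hlhs : 0 ≤ N ^ ((1 / 2 : ℝ) ^ (m + 1)) * M := by positivity
    have hsq : N ^ ((1 / 2 : ℝ) ^ m) * (M * M) < K * K := by
      have : N ^ ((1 / 2 : ℝ) ^ m) =
          N ^ ((1 / 2 : ℝ) ^ (m + 1)) * N ^ ((1 / 2 : ℝ) ^ (m + 1)) := by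
        rw [← Real.rpow_add_of_nonneg hN (by positivity) (by positivity)]
        congr 1
        ring
      calc _ = (N ^ ((1 / 2 : ℝ) ^ (m + 1)) * M) * (N ^ ((1 / 2 : ℝ) ^ (m + 1)) * M) := by
            rw [this]; ring
        _ < K * K := mul_self_lt_mul_self hlhs hK
    obtain ⟨K', hK', hK'K⟩ := exists_between hsq
    have h1 := ih (fun i => star (c i) * c i) (M * M) (by positivity)
      (fun i => by rw [CStarRing.norm_star_mul_self]; gcongr <;> exact hc i) K' hK'
    have h2 := (hf.star_sum_mul_self c).eventually_norm_sub_lt (sub_pos.2 hK'K)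
    filter_upwards [h1, h2] with n hn1 hn2
    have h3 : ‖star (∑ i, f i n * c i) * ∑ i, f i n * c i‖ < K * K := by
      linarith [norm_sub_norm_le (star (∑ i, f i n * c i) * ∑ i, f i n * c i)
        (∑ i, f i n * (star (c i) * c i))]
    rw [CStarRing.norm_star_mul_self] at h3
    exact lt_of_mul_self_lt_mul_self₀ (hlhs.trans hK.le) h3

/-- An asymptotically orthogonal central sum has norm asymptotically bounded by the supremum of
the norms of its components. -/
theorem eventually_norm_sum_mul_lt (hf : IsCentralPartition f) [Nonempty ι] {c : ι → A} {M : ℝ}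
    (hM : 0 ≤ M) (hc : ∀ i, ‖c i‖ ≤ M) {K : ℝ} (hK : M < K) :
    ∀ᶠ n in atTop, ‖∑ i, f i n * c i‖ < K := by
  have hlim : Tendsto (fun m : ℕ => (Fintype.card ι : ℝ) ^ ((1 / 2 : ℝ) ^ m) * M) atTop
      (𝓝 M) := by
    have h0 : Tendsto (fun m : ℕ => (1 / 2 : ℝ) ^ m) atTop (𝓝 0) :=
      tendsto_pow_atTop_nhds_zero_of_lt_one (by norm_num) (by norm_num)
    have h1 := (Real.continuousAt_const_rpow (a := (Fintype.card ι : ℝ)) (b := 0)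
      (Nat.cast_ne_zero.2 Fintype.card_ne_zero)).tendsto.comp h0
    simpa [Function.comp_def] using h1.mul_const M
  obtain ⟨m, hm⟩ := (hlim.eventually_lt_const hK).exists
  exact hf.eventually_norm_sum_mul_lt_rpow m c M hM hc K hm

end IsCentralPartition

section Actions

variable {A : Type*} [NonUnitalCStarAlgebra A] {G : Type*} [Group G]
  {α β : G → A ≃⋆ₐ[ℂ] A} {f : G → ℕ → A}

theorem norm_apply_inv_sub_eq (hα1 : ∀ a : A, α 1 a = a)
    (hαmul : ∀ (g h : G) (a : A), α (g * h) a = α g (α h a)) (h : G) (x : A) :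
    ‖α h (β h⁻¹ x) - x‖ = ‖β h⁻¹ x - α h⁻¹ x‖ := by
  have hx : α h (α h⁻¹ x) = x := by rw [← hαmul, mul_inv_cancel, hα1]
  rw [← StarAlgEquiv.norm_map (α h) (β h⁻¹ x - α h⁻¹ x), map_sub, hx]

variable [Fintype G]

theorem asympEq_map_sum_mul (hαmul : ∀ (g h : G) (a : A), α (g * h) a = α g (α h a))
    (hβmul : ∀ (g h : G) (a : A), β (g * h) a = β g (β h a))
    (hequiv : ∀ (a : A) (g h : G),
      AsympEq (fun n => α g (f h n) * a) (fun n => f (g * h) n * a)) (g : G) (x : A) :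
    AsympEq (fun n => α g (∑ h, f h n * α h (β h⁻¹ x)))
      (fun n => ∑ h, f h n * α h (β h⁻¹ (β g x))) := by
  have h := AsympEq.sum (s := Finset.univ) fun h _ => hequiv (α g (α h (β h⁻¹ x))) g h
  convert h using 2 with n n
  · simp
  · refine (Fintype.sum_equiv (Equiv.mulLeft g) _ _ fun h => ?_).symm
    simp only [Equiv.coe_mulLeft]
    rw [← hβmul, hαmul]
    simp

theorem IsCentralPartition.exists_almost_conj (hf : IsCentralPartition f)
    (hα1 : ∀ a : A, α 1 a = a)
    (hαmul : ∀ (g h : G) (a : A), α (g * h) a = α g (α h a))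
    (hβ1 : ∀ a : A, β 1 a = a)
    (hβmul : ∀ (g h : G) (a : A), β (g * h) a = β g (β h a))
    (haue : ∀ (g : G) (F₁ : Finset A) (δ : ℝ), 0 < δ →
      ∃ u ∈ unitary 𝓜(ℂ, A), ∀ y ∈ F₁, ‖(star u).snd (u.fst (β g y)) - α g y‖ < δ)
    (hequiv : ∀ (a : A) (g h : G),
      AsympEq (fun n => α g (f h n) * a) (fun n => f (g * h) n * a))
    (F E : Finset A) {δ : ℝ} (hδ : 0 < δ) :
    ∃ w : A, ‖w‖ ≤ Fintype.card G ∧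
      (∀ x ∈ F, ∀ g, ‖α g (w * x * star w) - w * β g x * star w‖ < δ) ∧
      (∀ x ∈ F, ‖w * x * star w - x‖ < δ + ⨆ g, ‖β g x - α g x‖) ∧
      ∀ y ∈ E, ‖star w * (w * y) - y‖ < δ := by
  classical
  set N : ℝ := (Fintype.card G : ℝ)
  have hN : 0 ≤ N := Nat.cast_nonneg _
  set η : ℝ := δ / (2 * N + 3)
  have hη : 0 < η := by positivity
  have hηδ : (2 * N + 3) * η = δ := by simp only [η]; field_simp
  choose u hu huη using fun h : G => haue h
    ((Finset.univ ×ˢ F).image fun p => β h⁻¹ (β p.1 p.2)) η hη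
  have hb (x : A) (hx : x ∈ F) (g h : G) :
      ‖(star (u h)).snd ((u h).fst (β g x)) - α h (β h⁻¹ (β g x))‖ ≤ η := by
    have := huη h (β h⁻¹ (β g x)) (Finset.mem_image.2 ⟨(g, x), by simpa using hx, rfl⟩)
    rw [← hβmul, mul_inv_cancel, hβ1] at this
    exact this.le
  have hsumb (x : A) (hx : x ∈ F) (g : G) (n : ℕ) :
      ‖∑ h, f h n * (star (u h)).snd ((u h).fst (β g x)) -
        ∑ h, f h n * α h (β h⁻¹ (β g x))‖ ≤ N * η := by
    rw [← Finset.sum_sub_distrib]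
    simp_rw [← mul_sub]
    exact hf.norm_sum_mul_le (hb x hx g) n
  set w : ℕ → A := fun n => ∑ h, (u h).snd (f h n)
  set T : A → ℕ → A := fun x n => ∑ h, f h n * α h (β h⁻¹ x) with hT
  have hconj : ∀ᶠ n in atTop, ∀ x ∈ F, ∀ g, ‖w n * β g x * star (w n) - T (β g x) n‖
      < (N + 1) * η := by
    rw [eventually_all_finset]
    intro x hx
    rw [eventually_all]
    intro g
    filter_upwards [(hf.conj_sum_snd u (β g x)).eventually_norm_sub_lt hη] with n hn
    linarith [norm_sub_le_norm_sub_add_norm_sub (w n * β g x * star (w n))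
      (∑ h, f h n * (star (u h)).snd ((u h).fst (β g x))) (T (β g x) n), hsumb x hx g n]
  have hmap : ∀ᶠ n in atTop, ∀ x ∈ F, ∀ g, ‖α g (T x n) - T (β g x) n‖ < η := by
    rw [eventually_all_finset]
    intro x hx
    rw [eventually_all]
    exact fun g => (asympEq_map_sum_mul hαmul hβmul hequiv g x).eventually_norm_sub_lt hη
  have hclose : ∀ᶠ n in atTop, ∀ x ∈ F, ‖T x n - x‖ < 2 * η + ⨆ g, ‖β g x - α g x‖ := by
    rw [eventually_all_finset]
    intro x hx
    have hle (g : G) : ‖β g x - α g x‖ ≤ ⨆ g, ‖β g x - α g x‖ :=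
      le_ciSup (f := fun g => ‖β g x - α g x‖) (Set.finite_range _).bddAbove g
    have h1 := hf.eventually_norm_sum_mul_lt (c := fun h => α h (β h⁻¹ x) - x)
      ((norm_nonneg _).trans (hle 1))
      (fun h => (norm_apply_inv_sub_eq hα1 hαmul h x).trans_le (hle h⁻¹)) (lt_add_of_pos_left _ hη)
    filter_upwards [h1, (hf.sum_mul x).eventually_norm_sub_lt hη] with n hn1 hn2
    have h3 : T x n - x = ∑ h, f h n * (α h (β h⁻¹ x) - x) + (∑ h, f h n * x - x) := by
      simp [hT, mul_sub]
    rw [h3]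
    linarith [norm_add_le (∑ h, f h n * (α h (β h⁻¹ x) - x)) (∑ h, f h n * x - x)]
  have hiso : ∀ᶠ n in atTop, ∀ y ∈ E, ‖star (w n) * (w n * y) - y‖ < δ := by
    rw [eventually_all_finset]
    exact fun y _ => (hf.star_sum_snd_mul hu y).eventually_norm_sub_lt hδ
  obtain ⟨n, h1, h2, h3, h4⟩ := (hconj.and (hmap.and (hclose.and hiso))).exists
  refine ⟨w n, ?_, fun x hx g => ?_, fun x hx => ?_, h4⟩
  · refine (norm_sum_le_of_le (n := fun _ => (1 : ℝ)) Finset.univ fun h _ => ?_).trans_eq (by simp [N])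
    exact (DoubleCentralizer.norm_snd_le_of_mem_unitary (hu h) _).trans (hf.norm_le h n)
  · have ha := h1 x hx 1
    rw [hβ1, ← StarAlgEquiv.norm_map (α g), map_sub] at ha
    have hb := h1 x hx g
    rw [norm_sub_rev] at hb
    linarith [h2 x hx g,
      norm_sub_le_norm_sub_add_norm_sub (α g (w n * x * star (w n))) (α g (T x n))
        (w n * β g x * star (w n)),
      norm_sub_le_norm_sub_add_norm_sub (α g (T x n)) (T (β g x) n) (w n * β g x * star (w n))]
  · have ha := h1 x hx 1
    rw [hβ1] at ha
    have : 0 ≤ N * η := by positivity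
    linarith [h3 x hx, norm_sub_le_norm_sub_add_norm_sub (w n * x * star (w n)) (T x n) x]

end Actions

theorem norm_conj_sub_conj_le {B : Type*} [CStarAlgebra B] {v w y : B} (hv : v ∈ unitary B)
    {θ N : ℝ} (hw : ‖w‖ ≤ N) (h : ‖(v - w) * y‖ ≤ θ) (h' : ‖(v - w) * star y‖ ≤ θ) :
    ‖v * y * star v - w * y * star w‖ ≤ (N + 1) * θ := by
  have hθ : 0 ≤ θ := (norm_nonneg _).trans h
  have key : v * y * star v - w * y * star w =
      v * star ((v - w) * star y) + (v - w) * y * star w := by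
    simp only [star_mul, star_sub, star_star]
    noncomm_ring
  calc _ ≤ ‖v * star ((v - w) * star y)‖ + ‖(v - w) * y * star w‖ := key ▸ norm_add_le _ _
    _ ≤ θ + θ * N := by
      gcongr
      · rwa [CStarRing.norm_mem_unitary_mul _ hv, norm_star]
      · refine (norm_mul_le _ _).trans ?_
        rw [norm_star]
        gcongr
    _ = _ := by ring

/-- Lemma 3.4: Let `A` be a separable C*-algebra with `A ⊆ closure(GL(Ã))`, and let `α`, `β`
be actions of a finite group `G` on `A` such that `α_g` and `β_g` are approximately unitarily
equivalent for every `g` and `α` admits Rohlin sequences.  Then for every finite set `F ⊆ A`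
and `ε > 0` there is a unitary `v ∈ Ã` with
`‖β_g(x) − v* α_g(v x v*) v‖ < ε` and `‖v x − x v‖ < ε + sup_g ‖β_g(x) − α_g(x)‖` on `F`. -/
theorem rohlin_one_step_conjugacy
    {A : Type*} [NonUnitalCStarAlgebra A] [PartialOrder A] [StarOrderedRing A]
    [TopologicalSpace.SeparableSpace A]
    (hGL : ∀ a : A, (a : Unitization ℂ A) ∈ closure {x : Unitization ℂ A | IsUnit x})
    {G : Type*} [Group G] [Fintype G]
    (α β : G → A ≃⋆ₐ[ℂ] A)
    (hα1 : ∀ a : A, α 1 a = a)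
    (hαmul : ∀ (g h : G) (a : A), α (g * h) a = α g (α h a))
    (hβ1 : ∀ a : A, β 1 a = a)
    (hβmul : ∀ (g h : G) (a : A), β (g * h) a = β g (β h a))
    -- (1) `α_g` and `β_g` are approximately unitarily equivalent, via unitaries in `M(A)`
    (haue : ∀ (g : G) (F₁ : Finset A) (δ : ℝ), 0 < δ →
      ∃ u ∈ unitary 𝓜(ℂ, A), ∀ y ∈ F₁, ‖(star u).snd (u.fst (β g y)) - α g y‖ < δ)
    -- (2) `α` admits Rohlin sequences `(f_{g,n})_n` of positive contractions
    (f : G → ℕ → A)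
    (hf_pos : ∀ g n, 0 ≤ f g n)
    (hf_norm : ∀ g n, ‖f g n‖ ≤ 1)
    (hf_central : ∀ (a : A) (g : G),
      Tendsto (fun n => ‖f g n * a - a * f g n‖) atTop (𝓝 0))
    (hf_orth : ∀ (a : A) (g h : G), g ≠ h →
      Tendsto (fun n => ‖f g n * f h n * a‖) atTop (𝓝 0))
    (hf_idem : ∀ (a : A) (g : G),
      Tendsto (fun n => ‖(f g n * f g n - f g n) * a‖) atTop (𝓝 0))
    (hf_sum : ∀ a : A,
      Tendsto (fun n => ‖(∑ k : G, f k n) * a - a‖) atTop (𝓝 0))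
    (hf_equiv : ∀ (a : A) (g h : G),
      Tendsto (fun n => ‖(α g (f h n) - f (g * h) n) * a‖) atTop (𝓝 0)) :
    ∀ (F : Finset A) (ε : ℝ), 0 < ε →
      ∃ v ∈ unitary (Unitization ℂ A), ∀ x ∈ F,
        (∀ g : G,
          ‖(β g x : Unitization ℂ A) -
            star v * Unitization.starMap (α g : A →⋆ₙₐ[ℂ] A)
              (v * (x : Unitization ℂ A) * star v) * v‖ < ε) ∧
        ‖v * (x : Unitization ℂ A) - (x : Unitization ℂ A) * v‖ <
          ε + ⨆ g : G, ‖β g x - α g x‖ := by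
  classical
  have hf : IsCentralPartition f := by
    refine ⟨fun g n => (hf_pos g n).isSelfAdjoint.star_eq, hf_norm,
      fun a g => .of_norm (hf_central a g), fun a g h hgh => .of_norm ?_,
      fun a g => .of_norm ?_, fun a => .of_norm ?_⟩
    · simpa [mul_assoc] using hf_orth a g h hgh
    · simpa [sub_mul, mul_assoc] using hf_idem a g
    · simpa [Finset.sum_mul] using hf_sum a
  have hequiv (a : A) (g h : G) :
      AsympEq (fun n => α g (f h n) * a) (fun n => f (g * h) n * a) :=
    .of_norm (by simpa [sub_mul] using hf_equiv a g h)
  intro F ε hε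
  set N : ℝ := (Fintype.card G : ℝ)
  have hN : 0 ≤ N := Nat.cast_nonneg _
  set θ : ℝ := ε / (2 * N + 3)
  have hθ : 0 < θ := by positivity
  have hθε : (2 * N + 3) * θ = ε := by simp only [θ]; field_simp
  set E₀ : Finset A := (Finset.univ ×ˢ F).image fun p : G × A => β p.1 p.2
  obtain ⟨w, hwN, hwα, hwx, hwE⟩ := hf.exists_almost_conj hα1 hαmul hβ1 hβmul haue hequiv F
    (E₀ ∪ E₀.image star) hθ
  obtain ⟨v, hv, hvw⟩ := exists_unitary_near_of_mem_closure_isUnit (hGL w)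
    ((E₀ ∪ E₀.image star).image ((↑) : A → Unitization ℂ A)) (δ := θ) (by
      rw [Finset.forall_mem_image]
      intro y hy
      have h : (star (w : Unitization ℂ A) * w - 1) * y =
          ((star w * (w * y) - y : A) : Unitization ℂ A) := by
        simp [sub_mul, mul_assoc]
      rw [h, Unitization.norm_inr]
      exact hwE y hy)
  rw [Finset.forall_mem_image] at hvw
  have hconj (x : A) (hx : x ∈ F) (g : G) :
      ‖v * (β g x : Unitization ℂ A) * star v -
        ((w * β g x * star w : A) : Unitization ℂ A)‖ ≤ (N + 1) * θ := by
    have hmem : β g x ∈ E₀ := Finset.mem_image.2 ⟨(g, x), by simpa using hx, rfl⟩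
    have h1 := hvw (Finset.mem_union_left _ hmem)
    have h2 := hvw (Finset.mem_union_right _ (Finset.mem_image_of_mem star hmem))
    rw [Unitization.inr_star] at h2
    simpa using norm_conj_sub_conj_le hv
      ((Unitization.norm_inr (𝕜 := ℂ) w).trans_le hwN) h1.le h2.le
  have hvs : star v * v = 1 := Unitary.star_mul_self_of_mem hv
  have hconj₁ (x : A) (hx : x ∈ F) : ‖v * (x : Unitization ℂ A) * star v -
      ((w * x * star w : A) : Unitization ℂ A)‖ ≤ (N + 1) * θ := by
    simpa only [hβ1] using hconj x hx 1
  refine ⟨v, hv, fun x hx => ⟨fun g => ?_, ?_⟩⟩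
  · set φ := Unitization.starMap (α g : A →⋆ₙₐ[ℂ] A) with hφ
    have hconjφ : ‖φ ((w * x * star w : A) : Unitization ℂ A) -
        φ (v * (x : Unitization ℂ A) * star v)‖ ≤ (N + 1) * θ := by
      rw [← map_sub]
      refine (NonUnitalStarAlgHom.norm_apply_le φ _).trans ?_
      rw [norm_sub_rev]
      exact hconj₁ x hx
    have hα : ‖((w * β g x * star w : A) : Unitization ℂ A) -
        φ ((w * x * star w : A) : Unitization ℂ A)‖ < θ := by
      rw [hφ, Unitization.starMap_inr, ← Unitization.inr_sub, Unitization.norm_inr, norm_sub_rev]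
      exact hwα x hx g
    have key : (β g x : Unitization ℂ A) - star v * φ (v * (x : Unitization ℂ A) * star v) * v =
        star v * (v * (β g x : Unitization ℂ A) * star v -
          φ (v * (x : Unitization ℂ A) * star v)) * v := by
      have h : star v * (v * (β g x : Unitization ℂ A) * star v) * v =
          (star v * v) * (β g x : Unitization ℂ A) * (star v * v) := by noncomm_ring
      rw [mul_sub, sub_mul, h, hvs, one_mul, mul_one]
    rw [key, CStarRing.norm_mul_mem_unitary _ hv,
      CStarRing.norm_mem_unitary_mul _ (Unitary.star_mem hv)]
    linarith [hconj x hx g,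
      norm_sub_le_norm_sub_add_norm_sub (v * (β g x : Unitization ℂ A) * star v)
        ((w * β g x * star w : A) : Unitization ℂ A) (φ (v * (x : Unitization ℂ A) * star v)),
      norm_sub_le_norm_sub_add_norm_sub ((w * β g x * star w : A) : Unitization ℂ A)
        (φ ((w * x * star w : A) : Unitization ℂ A)) (φ (v * (x : Unitization ℂ A) * star v))]
  · have key : v * (x : Unitization ℂ A) - x * v =
        (v * (x : Unitization ℂ A) * star v - x) * v := by
      rw [sub_mul, mul_assoc _ (star v), hvs, mul_one]
    have hx' : ‖((w * x * star w : A) : Unitization ℂ A) - x‖ <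
        θ + ⨆ g, ‖β g x - α g x‖ := by
      rw [← Unitization.inr_sub, Unitization.norm_inr]
      exact hwx x hx
    rw [key, CStarRing.norm_mul_mem_unitary _ hv]
    have : 0 ≤ N * θ := by positivity
    linarith [hconj₁ x hx, norm_sub_le_norm_sub_add_norm_sub
      (v * (x : Unitization ℂ A) * star v) ((w * x * star w : A) : Unitization ℂ A) x]
end

section
/- Let α be an action of a finite group G on a separable C*-algebra A which is locally representable: there are an increasing sequence (A_n)_{n∈ℕ} of α-invariant C*-subalgebras of A with dense union, and for each n a unitary representation u⁽ⁿ⁾ of G in the multiplier algebra M(A_n) (i.e. each u⁽ⁿ⁾(g) is unitary, g ↦ u⁽ⁿ⁾(g) is a group homomorphism with u⁽ⁿ⁾(ι) = 1 for the identity ι of G) such that α_g(a) = u⁽ⁿ⁾(g)·a·u⁽ⁿ⁾(g)* for all a ∈ A_n and g ∈ G. Let (h_n) be a sequence of positive contractions with h_n ∈ (A_n)^α which is an approximate unit for A, and set w_n(g) := u⁽ⁿ⁾(g)·h_n ∈ A_n ⊆ A. Then for all g, h ∈ G and all a ∈ A: (i) w_n(g)* = w_n(g⁻¹) for every n; (ii)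 lim_n ‖w_n(g)·a·w_n(g)* − α_g(a)‖ = 0; (iii) lim_n ‖(w_n(g)·w_n(h) − w_n(gh))·a‖ = 0; and (iv) lim_n ‖w_n(ι)·a − a‖ = 0. (The content of Proposition 4.8 of the paper — every locally representable action on a separable C*-algebra is approximately representable — stated at the level of representative sequences for the sequence algebra A^∞ = ℓ^∞(ℕ,A)/c₀(A).) -/
open scoped MultiplierAlgebra
open Filter Topology

namespace DoubleCentralizer

section CStar

variable {𝕜 B : Type*} [NontriviallyNormedField 𝕜] [NonUnitalNormedRing B] [NormedSpace 𝕜 B]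
  [SMulCommClass 𝕜 B B] [IsScalarTower 𝕜 B B] [StarRing B] [CStarRing B]

/-- The left action of a double centralizer commutes with right multiplication. -/
theorem fst_mul_apply (m : 𝓜(𝕜, B)) (a b : B) : m.fst (a * b) = m.fst a * b := by
  rw [← sub_eq_zero, ← CStarRing.star_mul_self_eq_zero_iff, mul_sub, ← mul_assoc, ← m.central,
    ← m.central, mul_assoc, sub_self]

variable [StarRing 𝕜] [StarModule 𝕜 B]

/-- Conjugation by a double centralizer, applied to a product. -/
theorem star_snd_fst_mul_star (m : 𝓜(𝕜, B)) (a b : B) :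
    (star m).snd (m.fst (a * star b)) = m.fst a * star (m.fst b) := by
  rw [star_snd, fst_mul_apply, star_mul, star_star, fst_mul_apply, star_mul, star_star]

/-- If a unitary double centralizer fixes `x` under conjugation, then it commutes with `x`. -/
theorem snd_eq_fst_of_conj_eq {m : 𝓜(𝕜, B)} (hm : m ∈ unitary 𝓜(𝕜, B)) {x : B}
    (hx : (star m).snd (m.fst x) = x) : m.snd x = m.fst x := by
  have key : (star m * m).snd (m.fst x) = m.snd ((star m).snd (m.fst x)) := by
    rw [mul_snd]; rfl
  rw [(Unitary.mem_iff.mp hm).1, hx] at key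
  exact key.symm

/-- The adjoint of `m · x`, for `x` self-adjoint and fixed under conjugation by the unitary `m`. -/
theorem star_fst_apply_of_conj_eq {m : 𝓜(𝕜, B)} (hm : m ∈ unitary 𝓜(𝕜, B)) {x : B}
    (hsa : star x = x) (hx : (star m).snd (m.fst x) = x) :
    star (m.fst x) = (star m).fst x := by
  rw [star_fst, hsa, snd_eq_fst_of_conj_eq hm hx]

/-- If conjugation by the unitary `m'` fixes `x`, then `(m · x)(m' · x) = (m m' · x) x`. -/
theorem fst_mul_fst_of_conj_eq (m : 𝓜(𝕜, B)) {m' : 𝓜(𝕜, B)} (hm' : m' ∈ unitary 𝓜(𝕜, B))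
    {x : B} (hx : (star m').snd (m'.fst x) = x) :
    m.fst x * m'.fst x = (m * m').fst x * x := by
  rw [← fst_mul_apply, ← m'.central, snd_eq_fst_of_conj_eq hm' hx, fst_mul_apply, mul_fst]
  rfl

end CStar

end DoubleCentralizer

/-- A star subalgebra of a C*-ring is a C*-ring. -/
theorem NonUnitalStarSubalgebra.cstarRing {𝕜 A : Type*} [NormedField 𝕜]
    [NonUnitalNormedRing A] [StarRing A] [CStarRing A] [NormedSpace 𝕜 A]
    (S : NonUnitalStarSubalgebra 𝕜 A) : CStarRing S where
  norm_mul_self_le x := CStarRing.norm_mul_self_le (x : A)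

/-- Proposition 4.8 (at the level of representative sequences): a locally representable
action `α` of a finite group `G` on a separable C*-algebra `A` is approximately
representable.  Here `α` is implemented on each member `A_n` of an increasing sequence of
`α`-invariant C*-subalgebras with dense union by a unitary representation `u⁽ⁿ⁾` of `G` in
the multiplier algebra `M(A_n)`, `(h_n)` is an approximate unit for `A` of positive
contractions fixed by `α` with `h_n ∈ A_n`, and `w_n(g) = u⁽ⁿ⁾(g)·h_n ∈ A`.  The sequences
`(w_n(g))_n` represent a unitary representation of `G` in `F(A^α, A)` implementing `α`. -/
theorem locallyRepresentable_approximatelyRepresentable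
    {A : Type*} [NonUnitalCStarAlgebra A] [PartialOrder A] [StarOrderedRing A]
    [TopologicalSpace.SeparableSpace A]
    {G : Type*} [Group G] [Finite G]
    (α : G → A ≃⋆ₐ[ℂ] A)
    (hα1 : ∀ a : A, α 1 a = a)
    (hαmul : ∀ (g h : G) (a : A), α (g * h) a = α g (α h a))
    (𝒜 : ℕ → NonUnitalStarSubalgebra ℂ A)
    (h𝒜closed : ∀ n, IsClosed ((𝒜 n : Set A)))
    (h𝒜mono : Monotone 𝒜)
    (h𝒜inv : ∀ (n : ℕ) (g : G), ∀ a ∈ 𝒜 n, α g a ∈ 𝒜 n)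
    (h𝒜dense : Dense (⋃ n, (𝒜 n : Set A)))
    -- the unitary representations `u⁽ⁿ⁾` of `G` in `M(A_n)` implementing `α` on `A_n`
    (u : (n : ℕ) → G → 𝓜(ℂ, ↥(𝒜 n)))
    (hu_unitary : ∀ (n : ℕ) (g : G), u n g ∈ unitary 𝓜(ℂ, ↥(𝒜 n)))
    (hu_one : ∀ n : ℕ, u n 1 = 1)
    (hu_mul : ∀ (n : ℕ) (g h : G), u n (g * h) = u n g * u n h)
    (hu_rep : ∀ (n : ℕ) (g : G) (a : 𝒜 n),
      α g (a : A) = (((star (u n g)).snd ((u n g).fst a) : ↥(𝒜 n)) : A))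
    -- the invariant approximate unit `(h_n)` with `h_n ∈ (A_n)^α`
    (h : ℕ → A) (hmem : ∀ n, h n ∈ 𝒜 n)
    (h_pos : ∀ n, 0 ≤ h n) (h_norm : ∀ n, ‖h n‖ ≤ 1)
    (h_fix : ∀ (n : ℕ) (g : G), α g (h n) = h n)
    (h_approx : ∀ x : A, Tendsto (fun n => ‖h n * x - x‖) atTop (𝓝 0))
    -- `w_n(g) = u⁽ⁿ⁾(g) · h_n ∈ A_n ⊆ A`
    (w : ℕ → G → A)
    (hw : ∀ (n : ℕ) (g : G), w n g = (((u n g).fst ⟨h n, hmem n⟩ : ↥(𝒜 n)) : A)) :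
    (∀ (n : ℕ) (g : G), star (w n g) = w n g⁻¹) ∧
    (∀ (g : G) (a : A),
      Tendsto (fun n => ‖w n g * a * star (w n g) - α g a‖) atTop (𝓝 0)) ∧
    (∀ (g h' : G) (a : A),
      Tendsto (fun n => ‖(w n g * w n h' - w n (g * h')) * a‖) atTop (𝓝 0)) ∧
    (∀ a : A, Tendsto (fun n => ‖w n 1 * a - a‖) atTop (𝓝 0)) := by
  have hcstar (n : ℕ) : CStarRing (𝒜 n) := (𝒜 n).cstarRing
  have hsa (n : ℕ) : star (h n) = h n := (IsSelfAdjoint.of_nonneg (h_pos n)).star_eq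
  have hsa' (n : ℕ) : star (⟨h n, hmem n⟩ : 𝒜 n) = ⟨h n, hmem n⟩ := Subtype.ext (hsa n)
  have hconj (n : ℕ) (g : G) :
      (star (u n g)).snd ((u n g).fst ⟨h n, hmem n⟩) = ⟨h n, hmem n⟩ :=
    Subtype.ext ((hu_rep n g ⟨h n, hmem n⟩).symm.trans (h_fix n g))
  have hu_inv (n : ℕ) (g : G) : star (u n g) = u n g⁻¹ :=
    left_inv_eq_right_inv (Unitary.mem_iff.mp (hu_unitary n g)).1
      (by rw [← hu_mul, mul_inv_cancel, hu_one])
  have hstar (n : ℕ) (g : G) : star (w n g) = w n g⁻¹ := by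
    rw [hw, hw, ← hu_inv,
      ← DoubleCentralizer.star_fst_apply_of_conj_eq (hu_unitary n g) (hsa' n) (hconj n g)]
    rfl
  have hmul (n : ℕ) (g g' : G) : w n g * w n g' = w n (g * g') * h n := by
    simp only [hw, hu_mul]
    exact congr_arg Subtype.val
      (DoubleCentralizer.fst_mul_fst_of_conj_eq (u n g) (hu_unitary n g') (hconj n g'))
  have hsandwich (n : ℕ) (g : G) (a : A) (ha : a ∈ 𝒜 n) :
      w n g * a * star (w n g) = α g (h n * a * h n) := by
    have key := DoubleCentralizer.star_snd_fst_mul_star (u n g)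
      (⟨h n, hmem n⟩ * ⟨a, ha⟩) ⟨h n, hmem n⟩
    rw [hsa', DoubleCentralizer.fst_mul_apply (u n g) ⟨h n, hmem n⟩ ⟨a, ha⟩] at key
    have hval := congr_arg (Subtype.val : 𝒜 n → A) key
    rw [← hu_rep] at hval
    rw [hw]
    exact hval.symm
  have hw_one (n : ℕ) : w n 1 = h n := by rw [hw, hu_one]; rfl
  have hw_norm (n : ℕ) (g : G) : ‖w n g‖ ≤ 1 := by
    have h1 : w n g * star (w n g) = h n * h n := by
      rw [hstar, hmul, mul_inv_cancel, hw_one]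
    have h2 : ‖w n g‖ * ‖w n g‖ ≤ 1 := by
      rw [← CStarRing.norm_self_mul_star, h1]
      exact (norm_mul_le _ _).trans (mul_le_one₀ (h_norm n) (norm_nonneg _) (h_norm n))
    nlinarith [norm_nonneg (w n g)]
  refine ⟨hstar, fun g a => ?_, fun g g' a => ?_, fun a => ?_⟩
  · rw [← tendsto_iff_norm_sub_tendsto_zero]
    have hα : Continuous (α g) := (StarAlgEquiv.isometry (α g)).continuous
    have hlip (n : ℕ) : LipschitzWith 1 (fun a => w n g * a * star (w n g)) :=
      LipschitzWith.of_dist_le_mul fun x y => by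
        rw [dist_eq_norm, dist_eq_norm, ← sub_mul, ← mul_sub, NNReal.coe_one, one_mul]
        calc ‖w n g * (x - y) * star (w n g)‖
            ≤ ‖w n g‖ * ‖x - y‖ * ‖star (w n g)‖ := norm_mul₃_le
          _ ≤ 1 * ‖x - y‖ * 1 := by
            rw [norm_star]
            gcongr <;> exact hw_norm n g
          _ = ‖x - y‖ := by ring
    have hclosed := (LipschitzWith.uniformEquicontinuous _ 1 hlip).equicontinuous
      |>.isClosed_setOfPred_tendsto (l := atTop) hα
    refine hclosed.closure_subset_iff.mpr ?_ (h𝒜dense a)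
    intro b hb
    obtain ⟨m, hm⟩ := Set.mem_iUnion.mp hb
    have hleft (x : A) : Tendsto (fun n => h n * x) atTop (𝓝 x) :=
      tendsto_iff_norm_sub_tendsto_zero.mpr (h_approx x)
    have hright : Tendsto (fun n => b * h n) atTop (𝓝 b) := by
      simpa [hsa] using (hleft (star b)).star
    have hboth : Tendsto (fun n => h n * b * h n) atTop (𝓝 b) := by
      rw [tendsto_iff_norm_sub_tendsto_zero] at hright ⊢
      refine squeeze_zero (fun _ => norm_nonneg _) (fun n => ?_)
        (by simpa using hright.add (h_approx b))
      calc ‖h n * b * h n - b‖ = ‖h n * (b * h n - b) + (h n * b - b)‖ := by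
            congr 1; rw [mul_sub, mul_assoc]; abel
        _ ≤ ‖h n‖ * ‖b * h n - b‖ + ‖h n * b - b‖ :=
            (norm_add_le _ _).trans (by gcongr; exact norm_mul_le _ _)
        _ ≤ ‖b * h n - b‖ + ‖h n * b - b‖ := by
            gcongr
            exact mul_le_of_le_one_left (norm_nonneg _) (h_norm n)
    refine ((hα.tendsto b).comp hboth).congr' ?_
    filter_upwards [eventually_ge_atTop m] with n hn
    exact (hsandwich n g b (h𝒜mono hn hm)).symm
  · refine squeeze_zero (fun _ => norm_nonneg _) (fun n => ?_) (h_approx a)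
    rw [hmul, sub_mul, mul_assoc, ← mul_sub]
    exact (norm_mul_le _ _).trans
      (mul_le_of_le_one_left (norm_nonneg _) (hw_norm n (g * g')))
  · simpa only [hw_one] using h_approx a
end
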